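/- Let X_n be a reversible Markov chain on a countable state space with reversing measure π satisfying π(x) ≥ 1 for all x in the range of the chain up to time t. Then (Carne–Varopoulos bound) for any states x, y and time n: P^x(X_n = y) ≤ 2 √(π(y)/π(x)) · exp(−d(x,y)²/(2n)), where d is the graph distance induced by the transition structure. -/

import Mathlib

open Polynomial in
theorem cv_pell (n : ℕ) : (Chebyshev.T ℝ (n:ℤ))^2 + (1 - X^2) * (Chebyshev.U ℝ ((n:ℤ) - 1))^2 = 1 := by
  induction n with
  | zero => simp
  | succ n ih =>
    have h1 := Chebyshev.T_eq_X_mul_T_sub_pol_U ℝ ((n:ℤ) - 1)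
    have h2 := Chebyshev.T_eq_U_sub_X_mul_U ℝ (n:ℤ)
    rw [show ((n:ℤ) - 1 + 2) = n + 1 by ring, show ((n:ℤ) - 1 + 1) = n by ring] at h1
    have h3 : Chebyshev.U ℝ (n:ℤ) = Chebyshev.T ℝ (n:ℤ) + X * Chebyshev.U ℝ ((n:ℤ)-1) := by
      rw [h2]; ring
    push_cast
    rw [show ((n:ℤ) + 1 - 1) = n by ring, h1, h3]
    linear_combination ih

open Polynomial Matrix in
theorem cv_entry {ι : Type*} [Fintype ι] [DecidableEq ι] (A : Matrix ι ι ℝ) (hA : A.IsSymm)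
    (hc : ∀ v : ι → ℝ, ∑ x, (∑ y, A x y * v y)^2 ≤ ∑ y, v y ^ 2) (x y : ι) (k : ℤ) :
    |(aeval A (Chebyshev.T ℝ k)) x y| ≤ 1 := by
  rw [← Chebyshev.T_natAbs]
  generalize k.natAbs = n
  have hsymm : ∀ p : ℝ[X], (aeval A p).IsSymm := by
    intro p
    induction p using Polynomial.induction_on' with
    | add p q hp hq => rw [map_add]; exact hp.add hq
    | monomial n a =>
      rw [aeval_monomial, ← Algebra.smul_def]
      exact (hA.pow n).smul a
  set B := aeval A (Chebyshev.T ℝ (n:ℤ)) with hB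
  set C := aeval A (Chebyshev.U ℝ ((n:ℤ) - 1)) with hC
  have hp := congrArg (aeval A) (cv_pell n)
  have hp' : B * B + C * C - (A * C) * (A * C) = 1 := by
    have hcomm : C * A = A * C := by
      have h := congrArg (aeval A) (mul_comm (Chebyshev.U ℝ ((n:ℤ) - 1)) X)
      simpa using h
    simp only [map_add, map_mul, map_sub, map_pow, map_one, aeval_X] at hp
    rw [← hB, ← hC] at hp
    rw [← hp]
    have : A * C * (A * C) = A^2 * C^2 := by
      exact ((show Commute A C from hcomm.symm).mul_pow 2 ▸ (pow_two (A * C)).symm)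
    rw [this]
    noncomm_ring
  have hACs : (A * C).IsSymm := by
    have := hsymm (X * Chebyshev.U ℝ ((n:ℤ) - 1))
    simpa [hC] using this
  have sq : ∀ M : Matrix ι ι ℝ, M.IsSymm → (M * M) x x = ∑ z, (M z x)^2 := by
    intro M hM
    rw [Matrix.mul_apply]
    refine Finset.sum_congr rfl fun z _ => ?_
    rw [hM.apply, pow_two]
  have h := congrFun (congrFun hp' x) x
  rw [Matrix.sub_apply, Matrix.add_apply, sq B (hsymm _), sq C (hsymm _), sq (A*C) hACs,
    Matrix.one_apply_eq] at h
  have h2 := hc (fun z => C z x)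
  simp only [Matrix.mul_apply] at h
  have h3 : (B y x)^2 ≤ ∑ z, (B z x)^2 :=
    Finset.single_le_sum (f := fun z => (B z x)^2) (fun z _ => sq_nonneg _) (Finset.mem_univ y)
  have h4 : B y x = B x y := (hsymm (Chebyshev.T ℝ (n:ℤ))).apply x y
  rw [h4] at h3
  rw [← sq_le_one_iff_abs_le_one]
  linarith

open Polynomial Matrix in
theorem cv_core {ι : Type*} [Fintype ι] [DecidableEq ι] (A : Matrix ι ι ℝ) (hA : A.IsSymm)
    (hc : ∀ v : ι → ℝ, ∑ x, (∑ y, A x y * v y)^2 ≤ ∑ y, v y ^ 2) (x y : ι) (d : ℕ)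
    (hd : ∀ k < d, (A^k) x y = 0) (n : ℕ) (hn : 0 < n) :
    (A^n) x y ≤ 2 * Real.exp (-(d:ℝ)^2 / (2 * n)) := by
  have h0 : ∀ k : ℤ, k.natAbs < d → (aeval A (Chebyshev.T ℝ k)) x y = 0 := by
    intro k hk
    rw [aeval_eq_sum_range, Matrix.sum_apply]
    refine Finset.sum_eq_zero fun i hi => ?_
    rw [Chebyshev.natDegree_T, Finset.mem_range] at hi
    rw [Matrix.smul_apply, hd i (by omega), smul_zero]
  set l : ℝ := d / n with hl
  have hl0 : 0 ≤ l := by positivity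
  have key : ∀ m : ℕ, ∀ k : ℤ, |(aeval A (X^m * Chebyshev.T ℝ k)) x y| ≤
      Real.exp (-(l*d)) * Real.cosh l ^ m * (Real.exp (l*k) + Real.exp (-(l*k))) := by
    intro m
    induction m with
    | zero =>
      intro k
      simp only [pow_zero, one_mul, mul_one]
      by_cases hk : k.natAbs < d
      · rw [h0 k hk, abs_zero]; positivity
      · refine (cv_entry A hA hc x y k).trans ?_
        rw [mul_add, ← Real.exp_add, ← Real.exp_add]
        have hk' : (d:ℤ) ≤ k ∨ (d:ℤ) ≤ -k := by omega
        rcases hk' with h | h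
        · have h' : (d:ℝ) ≤ k := by exact_mod_cast h
          have : 1 ≤ Real.exp (-(l*d) + l*k) := Real.one_le_exp (by nlinarith)
          have := Real.exp_pos (-(l*d) + -(l*k))
          linarith
        · have h' : (d:ℝ) ≤ -k := by exact_mod_cast h
          have : 1 ≤ Real.exp (-(l*d) + -(l*k)) := Real.one_le_exp (by nlinarith)
          have := Real.exp_pos (-(l*d) + (l*k))
          linarith
    | succ m ih =>
      intro k
      have e : (2:ℝ[X]) * (X^(m+1) * Chebyshev.T ℝ k) =
          X^m * Chebyshev.T ℝ (k+1) + X^m * Chebyshev.T ℝ (k-1) := by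
        rw [Chebyshev.T_add_one]; ring
      have e2 := congrFun (congrFun (congrArg (aeval A) e) x) y
      rw [two_mul, map_add, map_add, Matrix.add_apply, Matrix.add_apply] at e2
      have i1 := ih (k+1)
      have i2 := ih (k-1)
      have e3 : Real.exp (-(l*d)) * Real.cosh l ^ (m+1) * (Real.exp (l*k) + Real.exp (-(l*k))) * 2
        = Real.exp (-(l*d)) * Real.cosh l ^ m * (Real.exp (l*(k+1:ℤ)) + Real.exp (-(l*(k+1:ℤ))))
        + Real.exp (-(l*d)) * Real.cosh l ^ m * (Real.exp (l*(k-1:ℤ)) + Real.exp (-(l*(k-1:ℤ)))) := by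
        push_cast
        rw [show l * ((k:ℝ)+1) = l*k + l by ring, show l * ((k:ℝ)-1) = l*k + -l by ring,
          neg_add, neg_add, neg_neg]
        simp only [Real.exp_add]
        rw [pow_succ]
        nth_rw 2 [Real.cosh_eq]
        ring
      rw [abs_le] at *
      constructor <;> linarith [i1.1, i1.2, i2.1, i2.2]
  have hk := key n 0
  simp only [Chebyshev.T_zero, mul_one, map_pow, aeval_X, Int.cast_zero, mul_zero, neg_zero,
    Real.exp_zero] at hk
  refine (le_abs_self _).trans (hk.trans ?_)
  have hcosh : Real.cosh l ^ n ≤ Real.exp (n * (l^2/2)) := by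
    rw [Real.exp_nat_mul]
    exact pow_le_pow_left₀ (Real.cosh_pos l).le (Real.cosh_le_exp_half_sq l) n
  have hn' : (n:ℝ) ≠ 0 := by positivity
  calc Real.exp (-(l*d)) * Real.cosh l ^ n * (1+1)
      ≤ Real.exp (-(l*d)) * Real.exp (n * (l^2/2)) * (1+1) := by gcongr
    _ = 2 * Real.exp (-(d:ℝ)^2 / (2 * n)) := by
      rw [← Real.exp_add, mul_comm]
      congr 1
      · norm_num
      · congr 1
        rw [hl]; field_simp; ring

/-- truncated chain -/
noncomputable def cvQ {S : Type*} [DecidableEq S] (P : S → S → ℝ) (F : Finset S) : ℕ → S → S → ℝ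
  | 0 => fun x y => if x = y then 1 else 0
  | n+1 => fun x y => ∑ z ∈ F, P x z * cvQ P F n z y



/-- Carne–Varopoulos bound for a reversible Markov chain on a
countable state space with reversing measure `π ≥ 1`:
`P^x(X_n = y) ≤ 2 √(π(y)/π(x)) exp(−d(x,y)²/(2n))`, where `d` is the graph
distance induced by the transition structure. -/
theorem stmt_4 {S : Type*} [Countable S] [DecidableEq S]
    (P : S → S → ℝ) (hPnn : ∀ x y, 0 ≤ P x y) (hProw : ∀ x, ∑' y, P x y = 1)
    (π : S → ℝ) (hπ : ∀ x, 1 ≤ π x)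
    (hrev : ∀ x y, π x * P x y = π y * P y x)
    (Pn : ℕ → S → S → ℝ)
    (hPn0 : ∀ x y, Pn 0 x y = if x = y then 1 else 0)
    (hPnS : ∀ n x y, Pn (n + 1) x y = ∑' z, P x z * Pn n z y)
    (dist : S → S → ℕ)
    (hdist : ∀ x y, 0 < Pn (dist x y) x y ∧ ∀ k < dist x y, Pn k x y = 0) :
    ∀ x y : S, ∀ n : ℕ, 0 < n →
      Pn n x y ≤ 2 * Real.sqrt (π y / π x) *
        Real.exp (-(dist x y : ℝ) ^ 2 / (2 * n)) := by
  have hsum : ∀ x, Summable (P x) := by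
    intro x
    by_contra h
    have := hProw x
    rw [tsum_eq_zero_of_not_summable h] at this
    norm_num at this
  have hfin : ∀ x (F : Finset S), ∑ z ∈ F, P x z ≤ 1 := by
    intro x F
    rw [← hProw x]
    exact (hsum x).sum_le_tsum F (fun z _ => hPnn x z)
  have hQ : ∀ F n x y, 0 ≤ cvQ P F n x y ∧ cvQ P F n x y ≤ 1 := by
    intro F n
    induction n with
    | zero => intro x y; simp only [cvQ]; split_ifs <;> norm_num
    | succ n ih =>
      intro x y
      refine ⟨Finset.sum_nonneg fun z _ => mul_nonneg (hPnn _ _) (ih z y).1, ?_⟩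
      refine le_trans (Finset.sum_le_sum fun z _ => ?_) (hfin x F)
      exact mul_le_of_le_one_right (hPnn _ _) (ih z y).2
  have hlim : ∀ n x y, Filter.Tendsto (fun F => cvQ P F n x y) Filter.atTop (nhds (Pn n x y)) := by
    intro n
    induction n with
    | zero => intro x y; rw [hPn0]; exact tendsto_const_nhds
    | succ n ih =>
      intro x y
      rw [hPnS]
      have e : ∀ F : Finset S, cvQ P F (n+1) x y =
          ∑' z, (if z ∈ F then P x z * cvQ P F n z y else 0) := by
        intro F
        rw [tsum_eq_sum (s := F) (fun z hz => by simp [hz])]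
        simp only [cvQ]
        exact Finset.sum_congr rfl fun z hz => by simp [hz]
      simp_rw [e]
      refine tendsto_tsum_of_dominated_convergence (hsum x) (fun z => ?_)
        (Filter.Eventually.of_forall fun F z => ?_)
      · refine ((ih z y).const_mul (P x z)).congr' ?_
        filter_upwards [Filter.eventually_ge_atTop {z}] with F hF
        rw [if_pos (hF (Finset.mem_singleton_self z))]
      · split_ifs
        · rw [Real.norm_of_nonneg (mul_nonneg (hPnn _ _) (hQ F n z y).1)]
          exact mul_le_of_le_one_right (hPnn _ _) (hQ F n z y).2
        · simpa using hPnn x z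
  have hPn1 : ∀ n x y, 0 ≤ Pn n x y ∧ Pn n x y ≤ 1 := fun n x y =>
    ⟨ge_of_tendsto' (hlim n x y) fun F => (hQ F n x y).1,
     le_of_tendsto' (hlim n x y) fun F => (hQ F n x y).2⟩
  have hle : ∀ F n x y, cvQ P F n x y ≤ Pn n x y := by
    intro F n
    induction n with
    | zero => intro x y; rw [hPn0]; rfl
    | succ n ih =>
      intro x y
      rw [hPnS]
      simp only [cvQ]
      refine (Finset.sum_le_sum fun z _ => mul_le_mul_of_nonneg_left (ih z y) (hPnn x z)).trans ?_
      refine Summable.sum_le_tsum F (fun z _ => mul_nonneg (hPnn _ _) (hPn1 n z y).1) ?_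
      exact Summable.of_nonneg_of_le (fun z => mul_nonneg (hPnn _ _) (hPn1 n z y).1)
        (fun z => mul_le_of_le_one_right (hPnn _ _) (hPn1 n z y).2) (hsum x)
  intro x y n hn
  have hπ0 : ∀ x, 0 < π x := fun x => lt_of_lt_of_le one_pos (hπ x)
  have hs0 : ∀ x, 0 < √(π x) := fun x => Real.sqrt_pos.2 (hπ0 x)
  have hs2 : ∀ x, √(π x) * √(π x) = π x := fun x => Real.mul_self_sqrt (hπ0 x).le
  refine le_of_tendsto (hlim n x y) ?_
  filter_upwards [Filter.eventually_ge_atTop {x, y}] with F hF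
  have hx : x ∈ F := hF (by simp)
  have hy : y ∈ F := hF (by simp)
  let A : Matrix F F ℝ := fun a b => √(π a) * P a b / √(π b)
  have hApow : ∀ m (a b : F), (A^m) a b = √(π a) * cvQ P F m a b / √(π b) := by
    intro m
    induction m with
    | zero =>
      intro a b
      rw [pow_zero, Matrix.one_apply]
      simp only [cvQ, Subtype.ext_iff]
      split_ifs with h
      · rw [h, mul_one, div_self (hs0 _).ne']
      · simp
    | succ m ih =>
      intro a b
      rw [pow_succ', Matrix.mul_apply]
      simp only [cvQ]
      rw [← Finset.sum_coe_sort F, Finset.mul_sum, Finset.sum_div]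
      refine Finset.sum_congr rfl fun z _ => ?_
      rw [ih]
      have := (hs0 z).ne'
      have := (hs0 b).ne'
      simp only [A]
      field_simp
  have hA : A.IsSymm := by
    ext a b
    change √(π b) * P b a / √(π a) = √(π a) * P a b / √(π b)
    rw [div_eq_div_iff (hs0 _).ne' (hs0 _).ne']
    have := hrev a b
    rw [← hs2 a, ← hs2 b] at this
    linarith
  have hc : ∀ v : F → ℝ, ∑ a, (∑ b, A a b * v b)^2 ≤ ∑ b, v b ^ 2 := by
    intro v
    have h1 : ∀ a : F, (∑ b, A a b * v b)^2 ≤ ∑ b : F, P b a * v b ^ 2 := by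
      intro a
      have e : ∑ b, A a b * v b = √(π a) * ∑ b : F, P a b * (v b / √(π b)) := by
        rw [Finset.mul_sum]
        refine Finset.sum_congr rfl fun b _ => ?_
        simp only [A]; ring
      have cs : (∑ b : F, P a b * (v b / √(π b)))^2 ≤
          (∑ b : F, P a b) * ∑ b : F, P a b * (v b / √(π b))^2 := by
        refine Finset.sum_sq_le_sum_mul_sum_of_sq_le_mul _ (fun b _ => hPnn _ _)
          (fun b _ => mul_nonneg (hPnn _ _) (sq_nonneg _)) (fun b _ => le_of_eq (by ring))
      have hP1 : (∑ b : F, P a b) ≤ 1 := by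
        rw [Finset.sum_coe_sort F (fun b => P a b)]; exact hfin a F
      have hnn : 0 ≤ ∑ b : F, P a b * (v b / √(π b))^2 :=
        Finset.sum_nonneg fun b _ => mul_nonneg (hPnn _ _) (sq_nonneg _)
      rw [e, mul_pow, pow_two (√(π a)), hs2]
      calc π a * (∑ b : F, P a b * (v b / √(π b)))^2
          ≤ π a * ∑ b : F, P a b * (v b / √(π b))^2 :=
            mul_le_mul_of_nonneg_left (cs.trans (mul_le_of_le_one_left hnn hP1)) (hπ0 a).le
        _ = ∑ b : F, P b a * v b ^ 2 := by
          rw [Finset.mul_sum]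
          refine Finset.sum_congr rfl fun b _ => ?_
          rw [div_pow, pow_two (√(π b)), hs2, ← mul_assoc, hrev]
          have := (hπ0 b).ne'
          field_simp
    refine (Finset.sum_le_sum fun a _ => h1 a).trans ?_
    rw [Finset.sum_comm]
    refine Finset.sum_le_sum fun b _ => ?_
    rw [← Finset.sum_mul, Finset.sum_coe_sort F (fun a => P b a)]
    exact mul_le_of_le_one_left (sq_nonneg _) (hfin b F)
  have hd : ∀ k < dist x y, (A^k) ⟨x, hx⟩ ⟨y, hy⟩ = 0 := by
    intro k hk
    rw [hApow]
    have h1 := hle F k x y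
    rw [(hdist x y).2 k hk] at h1
    have : cvQ P F k x y = 0 := le_antisymm h1 (hQ F k x y).1
    simp [this]
  have h := cv_core A hA hc ⟨x, hx⟩ ⟨y, hy⟩ (dist x y) hd n hn
  rw [hApow] at h
  simp only at h
  rw [div_le_iff₀ (hs0 y)] at h
  rw [Real.sqrt_div (hπ0 y).le]
  rw [mul_div_assoc', div_mul_eq_mul_div, le_div_iff₀ (hs0 x)]
  linarith
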